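/- arXiv:0801.2109 — 2 statements merged into one kernel-verified Lean document; each statement's English description precedes it below -/
import Mathlib

section
/- Let C = {(x, y) ∈ ℝ² : y² = x³} (the zero set of f(x, y) = y² − x³) and, for ε > 0, let U_ε = {(x, y) ∈ ℝ² : |y² − x³| ≤ ε}. Then for every ε > 0 there is no Lipschitz retraction of U_ε onto C; that is, there is no constant K ≥ 0 and no map r : U_ε → ℝ² such that r is K-Lipschitz on U_ε (with respect to the Euclidean distance), r(U_ε) ⊆ C, and r(p) = p for every p ∈ C. -/
/-- The cuspidal cubic `y² = x³` in `ℝ²`. -/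
def cuspCurve : Set (EuclideanSpace ℝ (Fin 2)) :=
  {p | (p 1) ^ 2 = (p 0) ^ 3}

/-- The set `|y² - x³| ≤ ε` in `ℝ²`. -/
def cuspNbhd (ε : ℝ) : Set (EuclideanSpace ℝ (Fin 2)) :=
  {p | |(p 1) ^ 2 - (p 0) ^ 3| ≤ ε}

/-!
A retraction onto the cusp sends the short vertical segment between the points `(t², ±t³)` to a
connected subset of the curve containing both endpoints, hence through the origin, which separates
the two branches. The segment has length `2t³` but its endpoints are at distance at least `t²` from
the origin, so a `K`-Lipschitz retraction forces `t² ≤ 2Kt³`, which fails as `t → 0⁺`. Only a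
neighbourhood of the origin is involved.
-/

open Filter Set Topology
open scoped Convex NNReal

theorem exists_mem_image_segment_eq_and_dist_le {E F α : Type*} [SeminormedAddCommGroup E]
    [NormedSpace ℝ E] [PseudoMetricSpace F] [LinearOrder α] [TopologicalSpace α]
    [OrderClosedTopology α] {K : ℝ≥0} {f : E → F} {g : F → α} {a b : E} {c : α}
    (hf : LipschitzOnWith K f [a -[ℝ] b]) (hg : ContinuousOn g (f '' [a -[ℝ] b]))
    (hc : c ∈ Icc (g (f a)) (g (f b))) :
    ∃ q ∈ f '' [a -[ℝ] b], g q = c ∧ dist (f a) q ≤ K * dist a b := by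
  have ha : a ∈ [a -[ℝ] b] := left_mem_segment ℝ a b
  have hgf : ContinuousOn (g ∘ f) [a -[ℝ] b] := hg.comp hf.continuousOn (mapsTo_image f _)
  obtain ⟨p, hp, hpc⟩ := (convex_segment a b).isPreconnected.intermediate_value ha
    (right_mem_segment ℝ a b) hgf hc
  have hap : dist a p ≤ dist a b := by
    simpa only [Metric.mem_closedBall'] using segment_subset_closedBall_left a b hp
  exact ⟨f p, mem_image_of_mem f hp, hpc, (hf.dist_le_mul a ha p hp).trans (by gcongr)⟩

theorem eq_zero_of_mem_cuspCurve_of_apply_one_eq_zero {p : EuclideanSpace ℝ (Fin 2)}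
    (hp : p ∈ cuspCurve) (h : p 1 = 0) : p = 0 := by
  have h0 : p 0 ^ 3 = 0 := by
    rw [← show p 1 ^ 2 = p 0 ^ 3 from hp, h, zero_pow two_ne_zero]
  ext i
  fin_cases i
  · exact eq_zero_of_pow_eq_zero h0
  · exact h

theorem cuspNbhd_mem_nhds_zero {ε : ℝ} (hε : 0 < ε) : cuspNbhd ε ∈ 𝓝 0 := by
  have hcont : Continuous fun p : EuclideanSpace ℝ (Fin 2) ↦ |p 1 ^ 2 - p 0 ^ 3| := by fun_prop
  exact hcont.continuousAt.eventually_le_const (by simpa using hε)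

/-- The parametrization `t ↦ (t², t³)` of the cuspidal cubic; the two branches at the cusp are
`t ≥ 0` and `t ≤ 0`. -/
def cuspPoint (t : ℝ) : EuclideanSpace ℝ (Fin 2) :=
  !₂[t ^ 2, t ^ 3]

namespace cuspPoint

@[simp]
theorem apply_zero (t : ℝ) : cuspPoint t 0 = t ^ 2 := rfl

@[simp]
theorem apply_one (t : ℝ) : cuspPoint t 1 = t ^ 3 := rfl

theorem mem_cuspCurve (t : ℝ) : cuspPoint t ∈ cuspCurve :=
  pow_right_comm t 3 2

theorem tendsto_zero : Tendsto cuspPoint (𝓝 0) (𝓝 0) := by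
  have hcont : Continuous cuspPoint := by unfold cuspPoint; fun_prop
  have h0 : cuspPoint 0 = 0 :=
    eq_zero_of_mem_cuspCurve_of_apply_one_eq_zero (mem_cuspCurve 0) (by simp)
  simpa only [h0] using hcont.tendsto 0

theorem sq_le_norm (t : ℝ) : t ^ 2 ≤ ‖cuspPoint t‖ := by
  simpa using PiLp.norm_apply_le (cuspPoint t) 0

theorem dist_neg_self (t : ℝ) : dist (cuspPoint (-t)) (cuspPoint t) = 2 * |t| ^ 3 := by
  have h : -t ^ 3 - t ^ 3 = -(2 * t ^ 3) := by ring
  simp [EuclideanSpace.dist_eq, Real.dist_eq, Real.sqrt_sq_eq_abs, Odd.neg_pow (by decide : Odd 3),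
    h, abs_mul, abs_pow]

theorem eventually_segment_subset {U : Set (EuclideanSpace ℝ (Fin 2))} (hU : U ∈ 𝓝 0) :
    ∀ᶠ t in 𝓝 0, [cuspPoint (-t) -[ℝ] cuspPoint t] ⊆ U := by
  have hneg : Tendsto (fun t ↦ cuspPoint (-t)) (𝓝 0) (𝓝 0) :=
    tendsto_zero.comp (by simpa using tendsto_neg (0 : ℝ))
  exact Eventually.segment_of_prod_nhds (r := fun _ v ↦ v ∈ U) hneg tendsto_zero
    (Eventually.prod_inr hU _)

theorem one_le_of_lipschitzOnWith_segment {K : ℝ≥0} {t : ℝ}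
    {r : EuclideanSpace ℝ (Fin 2) → EuclideanSpace ℝ (Fin 2)} (ht : 0 < t)
    (hlip : LipschitzOnWith K r [cuspPoint (-t) -[ℝ] cuspPoint t])
    (hmaps : MapsTo r [cuspPoint (-t) -[ℝ] cuspPoint t] cuspCurve)
    (hneg : r (cuspPoint (-t)) = cuspPoint (-t)) (hpos : r (cuspPoint t) = cuspPoint t) :
    1 ≤ 2 * K * t := by
  have hzero : (0 : ℝ) ∈ Icc (r (cuspPoint (-t)) 1) (r (cuspPoint t) 1) := by
    rw [hneg, hpos, apply_one, apply_one, Odd.neg_pow (by decide)]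
    exact ⟨neg_nonpos.mpr (by positivity), by positivity⟩
  obtain ⟨q, hq, hq1, hdist⟩ :=
    exists_mem_image_segment_eq_and_dist_le (g := fun p ↦ p 1) hlip (by fun_prop) hzero
  have hq0 : q = 0 :=
    eq_zero_of_mem_cuspCurve_of_apply_one_eq_zero (hmaps.image_subset hq) hq1
  refine le_of_mul_le_mul_right ?_ (pow_pos ht 2)
  calc 1 * t ^ 2 = (-t) ^ 2 := by ring
    _ ≤ ‖cuspPoint (-t)‖ := sq_le_norm (-t)
    _ ≤ K * dist (cuspPoint (-t)) (cuspPoint t) := by rwa [hneg, hq0, dist_zero_right] at hdist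
    _ = 2 * K * t * t ^ 2 := by rw [dist_neg_self, abs_of_pos ht]; ring

end cuspPoint

theorem stmt_3_general {U : Set (EuclideanSpace ℝ (Fin 2))} (hU : U ∈ 𝓝 0) :
    ¬ ∃ (K : ℝ≥0) (r : EuclideanSpace ℝ (Fin 2) → EuclideanSpace ℝ (Fin 2)),
        LipschitzOnWith K r U ∧ MapsTo r U cuspCurve ∧ EqOn r id (cuspCurve ∩ U) := by
  rintro ⟨K, r, hlip, hmaps, hfix⟩
  have hsmall : ∀ᶠ t : ℝ in 𝓝 0, 2 * K * t < 1 :=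
    (by fun_prop : Continuous fun t : ℝ ↦ 2 * K * t).continuousAt.eventually_lt_const (by simp)
  have hseg_small : ∀ᶠ t : ℝ in 𝓝[>] 0, [cuspPoint (-t) -[ℝ] cuspPoint t] ⊆ U ∧ 2 * K * t < 1 :=
    ((cuspPoint.eventually_segment_subset hU).and hsmall).filter_mono nhdsWithin_le_nhds
  obtain ⟨t, ⟨hseg, htK⟩, ht⟩ := (hseg_small.and self_mem_nhdsWithin).exists
  refine htK.not_ge (cuspPoint.one_le_of_lipschitzOnWith_segment ht (hlip.mono hseg)
    (hmaps.mono_left hseg) ?_ ?_)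
  · exact hfix ⟨cuspPoint.mem_cuspCurve _, hseg (left_mem_segment ℝ _ _)⟩
  · exact hfix ⟨cuspPoint.mem_cuspCurve _, hseg (right_mem_segment ℝ _ _)⟩

/-- For every `ε > 0` there is no Lipschitz retraction of
`{|y² - x³| ≤ ε}` onto the curve `{y² = x³}`. -/
theorem stmt_3 (ε : ℝ) (hε : 0 < ε) :
    ¬ ∃ (K : ℝ) (r : EuclideanSpace ℝ (Fin 2) → EuclideanSpace ℝ (Fin 2)),
        0 ≤ K ∧
        (∀ p ∈ cuspNbhd ε, ∀ q ∈ cuspNbhd ε, dist (r p) (r q) ≤ K * dist p q) ∧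
        (∀ p ∈ cuspNbhd ε, r p ∈ cuspCurve) ∧
        (∀ p ∈ cuspCurve, r p = p) := by
  rintro ⟨K, r, hK, hlip, hmaps, hfix⟩
  exact stmt_3_general (cuspNbhd_mem_nhds_zero hε)
    ⟨⟨K, hK⟩, r, .of_dist_le_mul hlip, hmaps, fun p hp ↦ hfix p hp.1⟩
end

section
/- Let r, s > 0 and let T(r, s) = {x ∈ ℝ⁴ : x₁² + x₂² = r² and x₃² + x₄² = s²}. Let γ : S¹ → T(r, s) be a continuous loop and let p : ℝ⁴ → ℝ² be the projection onto the first two coordinates, so that p ∘ γ is a continuous loop into the circle {(a, b) ∈ ℝ² : a² + b² = r²}. If the loop p ∘ γ is not nullhomotopic in that circle, then the diameter of the image of γ (with respect to the Euclidean distance of ℝ⁴) is at least 2r. -/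
/-- The torus `x₁² + x₂² = r²`, `x₃² + x₄² = s²` in `ℝ⁴`. -/
def bgTorus (r s : ℝ) : Set (EuclideanSpace ℝ (Fin 4)) :=
  {x | (x 0) ^ 2 + (x 1) ^ 2 = r ^ 2 ∧ (x 2) ^ 2 + (x 3) ^ 2 = s ^ 2}

/-- The unit circle `S¹ ⊆ ℝ²`. -/
def unitCircle : Set (EuclideanSpace ℝ (Fin 2)) :=
  Metric.sphere (0 : EuclideanSpace ℝ (Fin 2)) 1

/-- The circle of radius `r` centered at the origin in `ℝ²`. -/
def circleOfRadius (r : ℝ) : Set (EuclideanSpace ℝ (Fin 2)) :=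
  {a | (a 0) ^ 2 + (a 1) ^ 2 = r ^ 2}

/-! A map into a sphere that misses a point `p` is never antipodal to the constant map `-p`, so the
straight-line homotopy between them avoids the origin and can be pushed radially back to the
sphere. Hence a map into a sphere that is not nullhomotopic is surjective, and in particular hits a
pair of antipodal points. A loop lying over it under a projection that does not increase distances
has two points at least as far apart. -/

open Metric NormedSpace

theorem dist_le_dist_of_apply_eq_apply_embedding {𝕜 ι κ : Type*} [RCLike 𝕜] [Fintype ι] [Fintype κ]
    (e : κ ↪ ι) {a b : EuclideanSpace 𝕜 κ} {x y : EuclideanSpace 𝕜 ι}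
    (hax : ∀ k, a k = x (e k)) (hby : ∀ k, b k = y (e k)) : dist a b ≤ dist x y := by
  rw [EuclideanSpace.dist_eq, EuclideanSpace.dist_eq]
  refine Real.sqrt_le_sqrt ?_
  calc
    ∑ k, dist (a k) (b k) ^ 2 = ∑ i ∈ Finset.univ.map e, dist (x i) (y i) ^ 2 := by
      simp only [Finset.sum_map, hax, hby]
    _ ≤ ∑ i, dist (x i) (y i) ^ 2 := Finset.sum_le_univ_sum_of_nonneg fun i ↦ sq_nonneg _

theorem nullhomotopic_homeomorph_comp_iff {X Y Z : Type*} [TopologicalSpace X] [TopologicalSpace Y]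
    [TopologicalSpace Z] (e : Y ≃ₜ Z) (f : C(X, Y)) :
    ((e : C(Y, Z)).comp f).Nullhomotopic ↔ f.Nullhomotopic where
  mp h := by
    simpa only [← ContinuousMap.comp_assoc, Homeomorph.symm_comp_toContinuousMap,
      ContinuousMap.id_comp] using h.comp_right (e.symm : C(Z, Y))
  mpr h := h.comp_right _

section Sphere

variable {X E : Type*} [TopologicalSpace X] [NormedAddCommGroup E] [NormedSpace ℝ E] {r : ℝ}

theorem zero_mem_segment_iff_of_norm_eq {a b : E} (h : ‖a‖ = ‖b‖) :
    (0 : E) ∈ segment ℝ a b ↔ a = -b := by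
  rw [mem_segment_iff_sameRay, zero_sub, sub_zero, sameRay_neg_swap,
    sameRay_iff_of_norm_eq (by rwa [norm_neg])]

theorem continuousOn_normalize : ContinuousOn (normalize : E → E) {0}ᶜ :=
  (continuousOn_id.norm.inv₀ fun _ hx ↦ norm_ne_zero_iff.2 hx).smul continuousOn_id

theorem smul_normalize_mem_sphere (hr : 0 ≤ r) {x : E} (hx : x ≠ 0) :
    r • normalize x ∈ sphere (0 : E) r := by
  rw [mem_sphere_zero_iff_norm, norm_smul, norm_normalize hx, mul_one, Real.norm_of_nonneg hr]

theorem smul_normalize_of_mem_sphere {x : E} (hx : x ∈ sphere (0 : E) r) :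
    r • normalize x = x := by
  rw [← mem_sphere_zero_iff_norm.1 hx, norm_smul_normalize]

theorem homotopic_of_forall_ne_neg {f g : C(X, sphere (0 : E) r)} (h : ∀ x, f x ≠ -g x) :
    f.Homotopic g := by
  let ι : C(sphere (0 : E) r, E) := ⟨Subtype.val, continuous_subtype_val⟩
  let F := ContinuousMap.Homotopy.affine (ι.comp f) (ι.comp g)
  have F_mem_segment (y : unitInterval × X) : F y ∈ segment ℝ (f y.2 : E) (g y.2) := by
    rw [← Path.range_segment]
    exact Set.mem_range_self y.1
  have F_ne_zero (y : unitInterval × X) : F y ≠ 0 := by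
    intro hy
    have zero_mem_segment : (0 : E) ∈ segment ℝ (f y.2 : E) (g y.2) := by
      simpa only [hy] using F_mem_segment y
    exact h y.2 (Subtype.ext ((zero_mem_segment_iff_of_norm_eq (by simp)).1 zero_mem_segment))
  have r_nonneg (y : unitInterval × X) : 0 ≤ r := norm_eq_of_mem_sphere (f y.2) ▸ norm_nonneg _
  have continuous_smul_normalize : Continuous fun y ↦ r • normalize (F y) :=
    (continuousOn_normalize.comp_continuous F.continuous F_ne_zero).const_smul r
  exact ⟨{
    toFun y := ⟨r • normalize (F y), smul_normalize_mem_sphere (r_nonneg y) (F_ne_zero y)⟩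
    continuous_toFun := continuous_smul_normalize.subtype_mk _
    map_zero_left x := Subtype.ext <|
      (congrArg (fun v : E ↦ r • normalize v) (F.apply_zero x)).trans
        (smul_normalize_of_mem_sphere (f x).2)
    map_one_left x := Subtype.ext <|
      (congrArg (fun v : E ↦ r • normalize v) (F.apply_one x)).trans
        (smul_normalize_of_mem_sphere (g x).2) }⟩

theorem surjective_of_not_nullhomotopic {f : C(X, sphere (0 : E) r)} (hf : ¬ f.Nullhomotopic) :
    Function.Surjective f := by
  intro p
  by_contra! p_notMem_range
  exact hf ⟨-p, homotopic_of_forall_ne_neg fun x ↦ by simpa using p_notMem_range x⟩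

end Sphere

theorem circleOfRadius_eq_sphere {r : ℝ} (hr : 0 ≤ r) : circleOfRadius r = sphere 0 r := by
  rw [EuclideanSpace.sphere_zero_eq r hr]
  simp only [circleOfRadius, Fin.sum_univ_two]

instance : CompactSpace unitCircle := isCompact_iff_compactSpace.1 (isCompact_sphere _ _)

theorem stmt_5_general {X M E : Type*} [TopologicalSpace X] [PseudoMetricSpace M]
    [NormedAddCommGroup E] [NormedSpace ℝ E] [Nontrivial E] {r : ℝ} (hr : 0 ≤ r)
    {γ : X → M} (hγ : Bornology.IsBounded (Set.range γ)) {f : C(X, sphere (0 : E) r)}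
    (hfγ : ∀ x y, dist (f x) (f y) ≤ dist (γ x) (γ y)) (hf : ¬ f.Nullhomotopic) :
    2 * r ≤ diam (Set.range γ) := by
  obtain ⟨p⟩ := (NormedSpace.sphere_nonempty (x := (0 : E)).2 hr).to_subtype
  obtain ⟨x, hx⟩ := surjective_of_not_nullhomotopic hf p
  obtain ⟨y, hy⟩ := surjective_of_not_nullhomotopic hf (-p)
  calc
    2 * r = dist (f x) (f y) := by
      rw [hx, hy, Subtype.dist_eq, dist_eq_norm, coe_neg_sphere, sub_neg_eq_add, ← two_smul ℝ,
        norm_smul, norm_eq_of_mem_sphere, Real.norm_two]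
    _ ≤ dist (γ x) (γ y) := hfγ x y
    _ ≤ diam (Set.range γ) := dist_le_diam_of_mem hγ (Set.mem_range_self x) (Set.mem_range_self y)

/-- If a loop `γ` in the torus `T(r,s)` projects (by the projection onto
the first two coordinates) to a loop in the circle of radius `r` that is
not nullhomotopic in that circle, then the diameter of the image of `γ`
is at least `2 r`. -/
theorem stmt_5 (r s : ℝ) (hr : 0 < r) (hs : 0 < s)
    (γ : unitCircle → EuclideanSpace ℝ (Fin 4))
    (hγcont : Continuous γ)
    (hγmem : ∀ z, γ z ∈ bgTorus r s)
    (pγ : C(unitCircle, circleOfRadius r))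
    (hpγ : ∀ z : unitCircle,
      ((pγ z : EuclideanSpace ℝ (Fin 2)) 0 = γ z 0) ∧
      ((pγ z : EuclideanSpace ℝ (Fin 2)) 1 = γ z 1))
    (hnontriv : ¬ pγ.Nullhomotopic) :
    2 * r ≤ Metric.diam (Set.range γ) := by
  let e := Homeomorph.setCongr (circleOfRadius_eq_sphere hr.le)
  let f : C(unitCircle, sphere (0 : EuclideanSpace ℝ (Fin 2)) r) := .comp e pγ
  have not_nullhomotopic : ¬ f.Nullhomotopic :=
    mt (nullhomotopic_homeomorph_comp_iff e pγ).1 hnontriv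
  have dist_le (z w : unitCircle) : dist (f z) (f w) ≤ dist (γ z) (γ w) :=
    dist_le_dist_of_apply_eq_apply_embedding (Fin.castLEEmb (by decide : 2 ≤ 4))
      (Fin.forall_fin_two.2 (hpγ z)) (Fin.forall_fin_two.2 (hpγ w))
  exact stmt_5_general hr.le (isCompact_range hγcont).isBounded dist_le not_nullhomotopic
end
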